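/- Let n ≥ 3. For A ∈ Ê_n, let str(A) denote the number of defining inequalities of Ê_n that A satisfies strictly, i.e., the number of ordered pairs (i,j), i ≠ j, with A_{ij} > 0, plus the number of triples (i,j,k) of pairwise distinct indices with A_{ij} + A_{jk} > A_{ik}. Then: (i) str(L) = (n − 1)² for every line L ∈ L_n; and (ii) if A ∈ Ê_n is nonzero and A is not a positive scalar multiple of any line in L_n, then str(A) > (n − 1)². (Equivalently, a line lies on exactly (n−1)³ of the n(n−1)² facets of Ê_n, and every other nonzero point of Ê_n lies on fewer; hence the set L_n is invariant under every combinatorial automorphism of Ê_n.) -/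

import Mathlib

/-- The cone of quasi-semimetrics on `n` points. -/
def QSM (n : ℕ) : Set (Fin n → Fin n → ℝ) :=
  {A | (∀ i, A i i = 0) ∧ (∀ i j : Fin n, i ≠ j → 0 ≤ A i j) ∧
    (∀ i j k : Fin n, i ≠ j → j ≠ k → i ≠ k → A i k ≤ A i j + A j k)}

/-- The line `R^(r)`: all ones on row `r` off the diagonal, zero elsewhere. -/
def lineR (n : ℕ) (r : Fin n) : Fin n → Fin n → ℝ :=
  fun i j => if i = r ∧ j ≠ r then 1 else 0

/-- The line `C^(r)`: all ones on column `r` off the diagonal, zero elsewhere. -/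
def lineC (n : ℕ) (r : Fin n) : Fin n → Fin n → ℝ :=
  fun i j => if j = r ∧ i ≠ r then 1 else 0

/-- The set `L_n` of the `2n` lines. -/
def Lines (n : ℕ) : Set (Fin n → Fin n → ℝ) :=
  Set.range (lineR n) ∪ Set.range (lineC n)

/-- The number of defining inequalities of `Ê_n` satisfied strictly by `A`:
strict nonnegativity inequalities plus strict triangle inequalities. -/
noncomputable def strCount (n : ℕ) (A : Fin n → Fin n → ℝ) : ℕ :=
  (Finset.univ.filter fun p : Fin n × Fin n => p.1 ≠ p.2 ∧ 0 < A p.1 p.2).card +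
  (Finset.univ.filter fun t : Fin n × Fin n × Fin n =>
    t.1 ≠ t.2.1 ∧ t.2.1 ≠ t.2.2 ∧ t.1 ≠ t.2.2 ∧
      A t.1 t.2.2 < A t.1 t.2.1 + A t.2.1 t.2.2).card

/-!
The pairs `{i, j}` with `A i j` or `A j i` positive form a graph on the indices. If it contains
`{i, j}`, then one of `N_{ij}`, `N_{ji}` is strict, and so is one of `T_{ijk}`, `T_{jik}` for each
third index `k`, since the slacks of the last two add up to `A i j + A j i`. Hence a graph with
`m` edges forces `m (n - 1)` strict inequalities. If all degrees are at least two, then `m ≥ n` and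
this exceeds `(n - 1)²`. If instead `i` has at most one neighbour `r`, the triangle inequality
through `i` makes `A` vanish off row and column `r`, so that `A = a R^(r) + b C^(r)`; for such `A`
the strict inequalities can be counted exactly.
-/

open Finset

section Definitions

variable {ι M : Type*} [AddCommGroup M] [LinearOrder M]

/-- Quasi-semimetrics on an arbitrary index type, with values in an ordered group. -/
structure IsQuasiSemimetric (A : ι → ι → M) : Prop where
  diag_eq_zero : ∀ i, A i i = 0
  nonneg_of_ne : ∀ i j, i ≠ j → 0 ≤ A i j
  triangle_of_ne : ∀ i j k, i ≠ j → j ≠ k → i ≠ k → A i k ≤ A i j + A j k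

variable [DecidableEq ι]

/-- The multiple `c R^(r)` of a row line. Making the weight `c` a parameter avoids scalar
multiplication, so that the values may lie in a group. -/
def rowLine (r : ι) (c : M) : ι → ι → M :=
  fun i j => if i = r ∧ j ≠ r then c else 0

/-- The multiple `c C^(r)` of a column line. -/
def colLine (r : ι) (c : M) : ι → ι → M :=
  fun i j => if j = r ∧ i ≠ r then c else 0

variable (ι) in
/-- The set of the lines `R^(r)` and `C^(r)` over an arbitrary index type and ring. -/
def unitLines (R : Type*) [Ring R] : Set (ι → ι → R) :=
  Set.range (fun r => rowLine r 1) ∪ Set.range (fun r => colLine r 1)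

/-- The graph joining `i` and `j` when `A i j` or `A j i` is positive. -/
def supportGraph (A : ι → ι → M) : SimpleGraph ι :=
  SimpleGraph.fromRel fun i j => 0 < A i j

instance (A : ι → ι → M) : DecidableRel (supportGraph A).Adj :=
  inferInstanceAs (DecidableRel (SimpleGraph.fromRel _).Adj)

variable [Fintype ι]

/-- The pairs `(i, j)` for which `A` satisfies `N_{ij}` strictly. -/
def positivePairs (A : ι → ι → M) : Finset (ι × ι) :=
  univ.filter fun p => p.1 ≠ p.2 ∧ 0 < A p.1 p.2

/-- The triples `(i, j, k)` for which `A` satisfies `T_{ijk}` strictly. -/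
def strictTriangles (A : ι → ι → M) : Finset (ι × ι × ι) :=
  univ.filter fun t => t.1 ≠ t.2.1 ∧ t.2.1 ≠ t.2.2 ∧ t.1 ≠ t.2.2 ∧
    A t.1 t.2.2 < A t.1 t.2.1 + A t.2.1 t.2.2

/-- The number `str(A)` of strict inequalities, over an arbitrary index type and ordered group. -/
def strictCount (A : ι → ι → M) : ℕ :=
  #(positivePairs A) + #(strictTriangles A)

@[simp]
lemma mem_positivePairs {A : ι → ι → M} {i j : ι} :
    (i, j) ∈ positivePairs A ↔ i ≠ j ∧ 0 < A i j := by
  simp [positivePairs]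

@[simp]
lemma mem_strictTriangles {A : ι → ι → M} {i j k : ι} :
    (i, j, k) ∈ strictTriangles A ↔ i ≠ j ∧ j ≠ k ∧ i ≠ k ∧ A i k < A i j + A j k := by
  simp [strictTriangles]

end Definitions

section Lines

variable {ι M : Type*} [AddCommGroup M] [DecidableEq ι]

@[simp]
lemma rowLine_zero (r : ι) : rowLine r (0 : M) = 0 := by
  ext; simp [rowLine]

@[simp]
lemma colLine_zero (r : ι) : colLine r (0 : M) = 0 := by
  ext; simp [colLine]

lemma smul_rowLine_one {R : Type*} [Ring R] (r : ι) (c : R) : c • rowLine r 1 = rowLine r c := by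
  ext; simp [rowLine]

lemma smul_colLine_one {R : Type*} [Ring R] (r : ι) (c : R) : c • colLine r 1 = colLine r c := by
  ext; simp [colLine]

variable [LinearOrder M] [Fintype ι] {r : ι} {a b c : M}

lemma mem_positivePairs_rowLine_add_colLine {i j : ι} :
    (i, j) ∈ positivePairs (rowLine r a + colLine r b) ↔
      (i = r ∧ j ≠ r ∧ 0 < a) ∨ (i ≠ r ∧ j = r ∧ 0 < b) := by
  simp only [mem_positivePairs, rowLine, colLine, Pi.add_apply]
  by_cases hi : i = r <;> by_cases hj : j = r <;> simp [hi, hj, Ne.symm]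

lemma card_positivePairs_rowLine_add_colLine :
    #(positivePairs (rowLine r a + colLine r b)) =
      (if 0 < a then Fintype.card ι - 1 else 0) + if 0 < b then Fintype.card ι - 1 else 0 := by
  have eq_union : positivePairs (rowLine r a + colLine r b) =
      (if 0 < a then {r} ×ˢ ({r}ᶜ : Finset ι) else ∅) ∪
        if 0 < b then ({r}ᶜ : Finset ι) ×ˢ {r} else ∅ := by
    ext ⟨i, j⟩
    rw [mem_positivePairs_rowLine_add_colLine, mem_union]
    split_ifs <;> simp only [mem_product, mem_singleton, mem_compl, notMem_empty, *] <;> tauto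
  rw [eq_union, card_union_of_disjoint]
  · split_ifs <;> simp [card_compl]
  · rw [disjoint_left]
    split_ifs <;> simp +contextual

lemma card_offDiag_compl_singleton (r : ι) :
    #({r}ᶜ : Finset ι).offDiag = (Fintype.card ι - 1) * (Fintype.card ι - 2) := by
  rw [offDiag_card, card_compl, card_singleton, ← Nat.mul_sub_one, Nat.sub_sub]

variable [IsOrderedAddMonoid M]

lemma mem_strictTriangles_rowLine_add_colLine (hab : 0 < a + b) {i j k : ι} :
    (i, j, k) ∈ strictTriangles (rowLine r a + colLine r b) ↔
      j = r ∧ i ≠ r ∧ k ≠ r ∧ i ≠ k := by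
  simp only [mem_strictTriangles, rowLine, colLine, Pi.add_apply]
  grind

lemma card_strictTriangles_rowLine_add_colLine (hab : 0 < a + b) :
    #(strictTriangles (rowLine r a + colLine r b)) =
      (Fintype.card ι - 1) * (Fintype.card ι - 2) := by
  have eq_image : strictTriangles (rowLine r a + colLine r b) =
      ({r}ᶜ : Finset ι).offDiag.image fun p => (p.1, r, p.2) := by
    ext ⟨i, j, k⟩
    rw [mem_strictTriangles_rowLine_add_colLine hab]
    simp only [mem_image, mem_offDiag, mem_compl, mem_singleton, Prod.exists, Prod.mk.injEq]
    exact ⟨fun ⟨hj, h⟩ => ⟨i, k, h, rfl, hj.symm, rfl⟩,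
      fun ⟨_, _, h, hi, hj, hk⟩ => ⟨hj.symm, hi ▸ hk ▸ h⟩⟩
  rw [eq_image, card_image_of_injective, card_offDiag_compl_singleton]
  exact fun p q h => by simpa [Prod.ext_iff] using h

lemma sub_one_add_sub_one_mul_sub_two (n : ℕ) : (n - 1) + (n - 1) * (n - 2) = (n - 1) ^ 2 := by
  rcases n with _ | _ | n
  · rfl
  · rfl
  · change (n + 1) + (n + 1) * n = (n + 1) ^ 2
    ring

lemma strictCount_rowLine_add_colLine (hab : 0 < a + b) :
    strictCount (rowLine r a + colLine r b) =
      (if 0 < a then Fintype.card ι - 1 else 0) + (if 0 < b then Fintype.card ι - 1 else 0) +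
        (Fintype.card ι - 1) * (Fintype.card ι - 2) := by
  rw [strictCount, card_positivePairs_rowLine_add_colLine,
    card_strictTriangles_rowLine_add_colLine hab]

lemma strictCount_rowLine (hc : 0 < c) :
    strictCount (rowLine r c) = (Fintype.card ι - 1) ^ 2 := by
  simpa [hc, sub_one_add_sub_one_mul_sub_two] using
    strictCount_rowLine_add_colLine (r := r) (a := c) (b := 0) (by simpa using hc)

lemma strictCount_colLine (hc : 0 < c) :
    strictCount (colLine r c) = (Fintype.card ι - 1) ^ 2 := by
  simpa [hc, sub_one_add_sub_one_mul_sub_two] using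
    strictCount_rowLine_add_colLine (r := r) (a := 0) (b := c) (by simpa using hc)

lemma lt_strictCount_rowLine_add_colLine [Nontrivial ι] (ha : 0 < a) (hb : 0 < b) :
    (Fintype.card ι - 1) ^ 2 < strictCount (rowLine r a + colLine r b) := by
  rw [strictCount_rowLine_add_colLine (add_pos ha hb), if_pos ha, if_pos hb, add_assoc,
    sub_one_add_sub_one_mul_sub_two]
  exact Nat.lt_add_of_pos_left (Nat.sub_pos_of_lt Fintype.one_lt_card)

end Lines

namespace IsQuasiSemimetric

variable {ι M : Type*} [AddCommGroup M] [LinearOrder M] {A : ι → ι → M}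

lemma nonneg (hA : IsQuasiSemimetric A) (i j : ι) : 0 ≤ A i j := by
  rcases eq_or_ne i j with rfl | hij
  · exact (hA.diag_eq_zero i).ge
  · exact hA.nonneg_of_ne i j hij

lemma nontrivial (hA : IsQuasiSemimetric A) (hA0 : A ≠ 0) : Nontrivial ι := by
  by_contra! h
  exact hA0 (funext₂ fun i j => Subsingleton.elim i j ▸ hA.diag_eq_zero i)

lemma eq_zero_of_not_adj_supportGraph (hA : IsQuasiSemimetric A) {i j : ι}
    (hij : ¬ (supportGraph A).Adj i j) : A i j = 0 := by
  rcases eq_or_ne i j with rfl | hne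
  · exact hA.diag_eq_zero i
  · simp only [supportGraph, SimpleGraph.fromRel_adj, not_and, not_or, not_lt] at hij
    exact le_antisymm (hij hne).1 (hA.nonneg i j)

variable [IsOrderedAddMonoid M]

lemma triangle (hA : IsQuasiSemimetric A) (i j k : ι) : A i k ≤ A i j + A j k := by
  rcases eq_or_ne i j with rfl | hij
  · simp [hA.diag_eq_zero]
  rcases eq_or_ne j k with rfl | hjk
  · simp [hA.diag_eq_zero]
  rcases eq_or_ne i k with rfl | hik
  · simpa [hA.diag_eq_zero] using add_nonneg (hA.nonneg i j) (hA.nonneg j i)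
  · exact hA.triangle_of_ne i j k hij hjk hik

lemma add_pos_of_adj_supportGraph (hA : IsQuasiSemimetric A) {i j : ι}
    (hij : (supportGraph A).Adj i j) : 0 < A i j + A j i := by
  rcases hij.2 with h | h
  · exact add_pos_of_pos_of_nonneg h (hA.nonneg j i)
  · exact add_pos_of_nonneg_of_pos (hA.nonneg i j) h

variable [DecidableEq ι]

lemma exists_eq_rowLine_add_colLine (hA : IsQuasiSemimetric A) {r : ι}
    (hr : ∀ j k, j ≠ r → k ≠ r → A j k = 0) :
    ∃ a b, 0 ≤ a ∧ 0 ≤ b ∧ A = rowLine r a + colLine r b := by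
  obtain hs | ⟨s, hs⟩ := forall_or_exists_not (· = r)
  · exact ⟨0, 0, le_rfl, le_rfl, by ext i j; simp [hs i, hs j, hA.diag_eq_zero]⟩
  have row_const (j) (hj : j ≠ r) : A r j = A r s :=
    le_antisymm (by simpa [hr s j hs hj] using hA.triangle r s j)
      (by simpa [hr j s hj hs] using hA.triangle r j s)
  have col_const (j) (hj : j ≠ r) : A j r = A s r :=
    le_antisymm (by simpa [hr j s hj hs] using hA.triangle j s r)
      (by simpa [hr s j hs hj] using hA.triangle s j r)
  refine ⟨A r s, A s r, hA.nonneg r s, hA.nonneg s r, ?_⟩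
  ext i j
  by_cases hi : i = r <;> by_cases hj : j = r <;>
    simp [rowLine, colLine, *, hA.diag_eq_zero]

variable [Fintype ι]

lemma exists_forall_eq_zero_of_degree_le_one (hA : IsQuasiSemimetric A) {i : ι}
    (hi : (supportGraph A).degree i ≤ 1) : ∃ r, ∀ j k, j ≠ r → k ≠ r → A j k = 0 := by
  have : Nonempty ι := ⟨i⟩
  obtain ⟨r, hr⟩ := card_le_one_iff_subset_singleton.mp hi
  have not_adj (j) (hj : j ≠ r) : ¬ (supportGraph A).Adj i j := fun hij =>
    hj (mem_singleton.mp (hr ((SimpleGraph.mem_neighborFinset _ _ _).mpr hij)))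
  refine ⟨r, fun j k hj hk => le_antisymm ?_ (hA.nonneg j k)⟩
  calc A j k ≤ A j i + A i k := hA.triangle j i k
    _ = 0 := by
      rw [hA.eq_zero_of_not_adj_supportGraph fun h => not_adj j hj h.symm,
        hA.eq_zero_of_not_adj_supportGraph (not_adj k hk), add_zero]

end IsQuasiSemimetric

section EdgeCount

lemma card_le_card_edgeFinset_of_two_le_degree {V : Type*} [Fintype V] (G : SimpleGraph V)
    [DecidableRel G.Adj] (hdeg : ∀ v, 2 ≤ G.degree v) : Fintype.card V ≤ #G.edgeFinset := by
  refine Nat.le_of_mul_le_mul_left ?_ two_pos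
  calc 2 * Fintype.card V = ∑ _v : V, 2 := by rw [sum_const, card_univ, smul_eq_mul, mul_comm]
    _ ≤ ∑ v, G.degree v := sum_le_sum fun v _ => hdeg v
    _ = 2 * #G.edgeFinset := G.sum_degrees_eq_twice_card_edges

variable {ι M : Type*} [AddCommGroup M] [LinearOrder M] [DecidableEq ι] [Fintype ι]
  {A : ι → ι → M}

lemma card_edgeFinset_supportGraph_le (A : ι → ι → M) :
    #(supportGraph A).edgeFinset ≤ #(positivePairs A) := by
  refine le_trans (card_le_card fun e => ?_)
    (card_image_le (s := positivePairs A) (f := fun p => s(p.1, p.2)))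
  induction e with | _ i j
  rw [SimpleGraph.mem_edgeFinset, SimpleGraph.mem_edgeSet, mem_image]
  rintro ⟨hij, h | h⟩
  · exact ⟨(i, j), mem_positivePairs.mpr ⟨hij, h⟩, rfl⟩
  · exact ⟨(j, i), mem_positivePairs.mpr ⟨hij.symm, h⟩, Sym2.eq_swap⟩

variable [IsOrderedAddMonoid M]

lemma mem_strictTriangles_or_swap_mem {i j k : ι} (hij : i ≠ j) (hik : i ≠ k) (hjk : j ≠ k)
    (h : 0 < A i j + A j i) : (i, j, k) ∈ strictTriangles A ∨ (j, i, k) ∈ strictTriangles A := by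
  by_contra! hcon
  simp only [mem_strictTriangles, not_and, not_lt] at hcon
  have hle := add_le_add (hcon.1 hij hjk hik) (hcon.2 hij.symm hik hjk)
  rw [add_add_add_comm, add_comm (A j k)] at hle
  exact h.not_ge (by simpa using hle)

lemma IsQuasiSemimetric.card_edgeFinset_supportGraph_mul_le (hA : IsQuasiSemimetric A) :
    #(supportGraph A).edgeFinset * (Fintype.card ι - 2) ≤ #(strictTriangles A) := by
  have card_third : ∀ e ∈ (supportGraph A).edgeFinset, #e.toFinsetᶜ = Fintype.card ι - 2 :=
    fun e he => by
      rw [card_compl, Sym2.card_toFinset_of_not_isDiag e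
        ((supportGraph A).not_isDiag_of_mem_edgeFinset he)]
  rw [← sum_const_nat card_third, ← card_sigma]
  refine le_trans (card_le_card ?_)
    (card_image_le (s := strictTriangles A) (f := fun t => ⟨s(t.1, t.2.1), t.2.2⟩))
  rintro ⟨e, k⟩
  induction e with | _ i j
  simp only [mem_sigma, SimpleGraph.mem_edgeFinset, SimpleGraph.mem_edgeSet, mem_compl,
    Sym2.mem_toFinset, Sym2.mem_iff, not_or]
  rintro ⟨hij, hki, hkj⟩
  rcases mem_strictTriangles_or_swap_mem hij.ne (Ne.symm hki) (Ne.symm hkj)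
    (hA.add_pos_of_adj_supportGraph hij) with h | h
  · exact mem_image.mpr ⟨_, h, rfl⟩
  · exact mem_image.mpr ⟨_, h, by simp [Sym2.eq_swap]⟩

lemma IsQuasiSemimetric.lt_strictCount_of_two_le_degree [Nontrivial ι]
    (hA : IsQuasiSemimetric A) (hdeg : ∀ i, 2 ≤ (supportGraph A).degree i) :
    (Fintype.card ι - 1) ^ 2 < strictCount A := by
  set n := Fintype.card ι
  set m := #(supportGraph A).edgeFinset
  have hn : 2 ≤ n := Fintype.one_lt_card
  have hnm : n ≤ m := card_le_card_edgeFinset_of_two_le_degree _ hdeg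
  calc (n - 1) ^ 2 = (n - 1) * (n - 1) := sq _
    _ < m * (n - 1) := by gcongr <;> omega
    _ = m + m * (n - 2) := by rw [show n - 1 = 1 + (n - 2) by omega, mul_add, mul_one]
    _ ≤ strictCount A :=
      add_le_add (card_edgeFinset_supportGraph_le A) hA.card_edgeFinset_supportGraph_mul_le

end EdgeCount

lemma IsQuasiSemimetric.lt_strictCount {ι M : Type*} [DecidableEq ι] [Fintype ι] [AddCommGroup M]
    [LinearOrder M] [IsOrderedAddMonoid M] {A : ι → ι → M} (hA : IsQuasiSemimetric A)
    (hA0 : A ≠ 0) (hrow : ∀ r c, 0 < c → A ≠ rowLine r c) (hcol : ∀ r c, 0 < c → A ≠ colLine r c) :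
    (Fintype.card ι - 1) ^ 2 < strictCount A := by
  have := hA.nontrivial hA0
  by_cases! hdeg : ∀ i, 2 ≤ (supportGraph A).degree i
  · exact hA.lt_strictCount_of_two_le_degree hdeg
  obtain ⟨i, hi⟩ := hdeg
  obtain ⟨r, hr⟩ := hA.exists_forall_eq_zero_of_degree_le_one (Nat.le_of_lt_succ hi)
  obtain ⟨a, b, ha, hb, rfl⟩ := hA.exists_eq_rowLine_add_colLine hr
  rcases ha.eq_or_lt with rfl | ha <;> rcases hb.eq_or_lt with rfl | hb
  · simp at hA0
  · exact absurd (by simp) (hcol r b hb)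
  · exact absurd (by simp) (hrow r a ha)
  · exact lt_strictCount_rowLine_add_colLine ha hb

theorem stmt18_general (ι R : Type*) [DecidableEq ι] [Fintype ι] [Ring R] [LinearOrder R]
    [IsStrictOrderedRing R] :
    (∀ L ∈ unitLines ι R, strictCount L = (Fintype.card ι - 1) ^ 2) ∧
    (∀ A : ι → ι → R, IsQuasiSemimetric A → A ≠ 0 →
      (∀ c : R, 0 < c → ∀ L ∈ unitLines ι R, A ≠ c • L) →
      (Fintype.card ι - 1) ^ 2 < strictCount A) := by
  refine ⟨?_, fun A hA hA0 hL => hA.lt_strictCount hA0 (fun r c hc => ?_) (fun r c hc => ?_)⟩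
  · rintro L (⟨r, rfl⟩ | ⟨r, rfl⟩)
    · exact strictCount_rowLine one_pos
    · exact strictCount_colLine one_pos
  · exact smul_rowLine_one r c ▸ hL c hc _ (.inl ⟨r, rfl⟩)
  · exact smul_colLine_one r c ▸ hL c hc _ (.inr ⟨r, rfl⟩)

/-- Every line satisfies exactly `(n-1)²` defining inequalities strictly, and every
nonzero element of `Ê_n` which is not a positive multiple of a line satisfies strictly
more than `(n-1)²` of them.  (Hence `L_n` is invariant under every combinatorial
automorphism of `Ê_n`.) -/
theorem stmt18 (n : ℕ) (hn : 3 ≤ n) :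
    (∀ L ∈ Lines n, strCount n L = (n - 1) ^ 2) ∧
    (∀ A ∈ QSM n, A ≠ 0 → (∀ c : ℝ, 0 < c → ∀ L ∈ Lines n, A ≠ c • L) →
      (n - 1) ^ 2 < strCount n A) := by
  obtain ⟨hlines, hlt⟩ := Fintype.card_fin n ▸ stmt18_general (Fin n) ℝ
  exact ⟨hlines, fun A ⟨hdiag, hnonneg, htri⟩ => hlt A ⟨hdiag, hnonneg, htri⟩⟩
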